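/- Assume W is strongly connected, θ_j > 0 for at least one agent j, θ_i < 1 for every i, and ω ∈ (0,1). Fix a budget K with 1 ≤ K ≤ n, and let S₀ = ∅ and, for k = 1,…,K, S_k = S_{k−1} ∪ {i_k}, where i_k ∈ V is any agent maximizing sp₀(S_{k−1} ∪ {i}) over all i ∈ V (a greedy choice). Then the greedy output S_K satisfies sp₀(S_K) ≥ (1 − 1/e) · max{ sp₀(S) : S ⊆ V, |S| ≤ K }, where e is Euler's number. -/

import Mathlib

open Matrix Finset

/-- `H(S) = (I - ω Σ_{j∈S} e_j e_jᵀ) (I - Θ) W`. -/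
noncomputable def Hmat {n : ℕ} (W : Matrix (Fin n) (Fin n) ℝ) (θ : Fin n → ℝ) (ω : ℝ)
    (S : Finset (Fin n)) : Matrix (Fin n) (Fin n) ℝ :=
  (1 - Matrix.diagonal (fun i => if i ∈ S then ω else 0)) *
    ((1 - Matrix.diagonal θ) * W)

/-- `p₀(S) = (I - H(S))⁻¹ (I - Θ) ω Σ_{j∈S} e_j`. -/
noncomputable def p0vec {n : ℕ} (W : Matrix (Fin n) (Fin n) ℝ) (θ : Fin n → ℝ) (ω : ℝ)
    (S : Finset (Fin n)) : Fin n → ℝ :=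
  ((1 - Hmat W θ ω S)⁻¹ * (1 - Matrix.diagonal θ)).mulVec
    (fun j => if j ∈ S then ω else 0)

/-- The influencer's social power `sp₀(S) = (𝟙ᵀ p₀(S) + 1)/(n+1)`. -/
noncomputable def sp0 {n : ℕ} (W : Matrix (Fin n) (Fin n) ℝ) (θ : Fin n → ℝ) (ω : ℝ)
    (S : Finset (Fin n)) : ℝ :=
  ((∑ i, p0vec W θ ω S i) + 1) / (n + 1)

section helpers

variable {n : ℕ} {W : Matrix (Fin n) (Fin n) ℝ} {θ : Fin n → ℝ} {ω : ℝ}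

structure GHyp (W : Matrix (Fin n) (Fin n) ℝ) (θ : Fin n → ℝ) (ω : ℝ) : Prop where
  W0 : ∀ i j, 0 ≤ W i j
  W1 : ∀ i, ∑ j, W i j = 1
  conn : ∀ i j : Fin n, ∃ k, 1 ≤ k ∧ 0 < (W ^ k) i j
  t0 : ∀ i, 0 ≤ θ i
  tpos : ∃ j, 0 < θ j
  tlt : ∀ i, θ i < 1
  o0 : 0 < ω
  o1 : ω < 1

/-- indicator weight -/
noncomputable def ind (ω : ℝ) (S : Finset (Fin n)) (i : Fin n) : ℝ := if i ∈ S then ω else 0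

theorem GHyp.ind0 (h : GHyp W θ ω) (S : Finset (Fin n)) (i : Fin n) : 0 ≤ ind ω S i := by
  have := h.o0
  unfold ind; split_ifs <;> linarith

theorem GHyp.ind1 (h : GHyp W θ ω) (S : Finset (Fin n)) (i : Fin n) : ind ω S i < 1 := by
  have := h.o1
  unfold ind; split_ifs <;> linarith

theorem GHyp.indmono (h : GHyp W θ ω) {S T : Finset (Fin n)} (hST : S ⊆ T) (i : Fin n) :
    ind ω S i ≤ ind ω T i := by
  have := h.o0
  unfold ind; split_ifs with h1 h2 <;> first | linarith | exact absurd (hST h1) h2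

theorem Hmat_mulVec (S : Finset (Fin n)) (u : Fin n → ℝ) (i : Fin n) :
    (Hmat W θ ω S).mulVec u i = (1 - ind ω S i) * ((1 - θ i) * W.mulVec u i) := by
  unfold Hmat
  rw [← Matrix.mulVec_mulVec, ← Matrix.mulVec_mulVec, Matrix.sub_mulVec, Matrix.sub_mulVec]
  simp only [Matrix.one_mulVec, Pi.sub_apply, Matrix.mulVec_diagonal]
  unfold ind
  ring

theorem GHyp.mulVec_mono (h : GHyp W θ ω) {u v : Fin n → ℝ} (huv : ∀ i, u i ≤ v i) (i : Fin n) :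
    W.mulVec u i ≤ W.mulVec v i := by
  simp only [Matrix.mulVec, dotProduct]
  exact Finset.sum_le_sum fun j _ => mul_le_mul_of_nonneg_left (huv j) (h.W0 i j)

theorem GHyp.mulVec_const (h : GHyp W θ ω) (c : ℝ) (i : Fin n) :
    W.mulVec (fun _ => c) i = c := by
  simp only [Matrix.mulVec, dotProduct]
  rw [← Finset.sum_mul, h.W1, one_mul]

theorem GHyp.comparison (h : GHyp W θ ω) (S : Finset (Fin n)) (u : Fin n → ℝ)
    (hu : ∀ i, u i ≤ (1 - ind ω S i) * ((1 - θ i) * W.mulVec u i)) : ∀ i, u i ≤ 0 := by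
  intro i0
  by_contra! hpos
  obtain ⟨m, -, hm⟩ := Finset.exists_max_image Finset.univ u ⟨i0, Finset.mem_univ _⟩
  have hM : 0 < u m := lt_of_lt_of_le hpos (hm i0 (Finset.mem_univ _))
  have hle : ∀ i, W.mulVec u i ≤ u m := fun i => by
    have := h.mulVec_mono (u := u) (v := fun _ => u m) (fun j => hm j (Finset.mem_univ _)) i
    rwa [h.mulVec_const] at this
  have key : ∀ i, u i = u m → θ i = 0 ∧ W.mulVec u i = u m := by
    intro i hi
    have h1 := hu i
    rw [hi] at h1
    have a0 := h.ind0 S i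
    have a1 := h.ind1 S i
    have t0 := h.t0 i
    have t1 := h.tlt i
    have hl := hle i
    have hWpos : 0 < W.mulVec u i := by
      by_contra! hn
      have : (1 - ind ω S i) * ((1 - θ i) * W.mulVec u i) ≤ 0 :=
        mul_nonpos_of_nonneg_of_nonpos (by linarith)
          (mul_nonpos_of_nonneg_of_nonpos (by linarith) hn)
      linarith
    have h2 : (1 - ind ω S i) * ((1 - θ i) * W.mulVec u i) ≤ (1 - θ i) * W.mulVec u i := by
      have : 0 ≤ (1 - θ i) * W.mulVec u i := mul_nonneg (by linarith) hWpos.le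
      nlinarith
    have h3 : 0 ≤ θ i * W.mulVec u i := mul_nonneg t0 hWpos.le
    have h4 : W.mulVec u i = u m := by nlinarith
    refine ⟨?_, h4⟩
    have h5 : θ i * W.mulVec u i = 0 := by nlinarith
    rcases mul_eq_zero.1 h5 with h6 | h6
    · exact h6
    · linarith
  have step : ∀ i, u i = u m → ∀ j, 0 < W i j → u j = u m := by
    intro i hi j hj
    have h1 := (key i hi).2
    have h2 : ∑ l, W i l * (u m - u l) = 0 := by
      simp only [mul_sub, Finset.sum_sub_distrib, ← Finset.sum_mul, h.W1]
      simp only [Matrix.mulVec, dotProduct] at h1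
      linarith
    rw [Finset.sum_eq_zero_iff_of_nonneg] at h2
    · have := h2 j (Finset.mem_univ _)
      rcases mul_eq_zero.1 this with h6 | h6 <;> linarith
    · intro l _
      exact mul_nonneg (h.W0 _ _) (by linarith [hm l (Finset.mem_univ _)])
  have hpow0 : ∀ k i j, 0 ≤ (W ^ k) i j := by
    intro k
    induction k with
    | zero => intro i j; rw [pow_zero, Matrix.one_apply]; split_ifs <;> norm_num
    | succ k ih =>
      intro i j
      rw [pow_succ, Matrix.mul_apply]
      exact Finset.sum_nonneg fun l _ => mul_nonneg (ih _ _) (h.W0 _ _)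
  have reach : ∀ k j, 0 < (W ^ k) m j → u j = u m := by
    intro k
    induction k with
    | zero =>
      intro j hj
      rw [pow_zero, Matrix.one_apply] at hj
      split_ifs at hj with hmj
      · rw [hmj]
      · exact absurd hj (lt_irrefl _)
    | succ k ih =>
      intro j hj
      rw [pow_succ, Matrix.mul_apply] at hj
      obtain ⟨l, -, hl⟩ := Finset.exists_lt_of_sum_lt (s := Finset.univ) (f := fun _ => (0:ℝ))
        (by simpa using hj)
      have w1 := h.W0 l j
      have w2 := hpow0 k m l
      have w3 : 0 < W l j := lt_of_le_of_ne w1 (by rintro hh; rw [← hh] at hl; simp at hl)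
      have w4 : 0 < (W ^ k) m l := lt_of_le_of_ne w2 (by rintro hh; rw [← hh] at hl; simp at hl)
      exact step l (ih l w4) j w3
  obtain ⟨j, hj⟩ := h.tpos
  obtain ⟨k, -, hk⟩ := h.conn m j
  have := (key j (reach k j hk)).1
  linarith

theorem GHyp.isUnit (h : GHyp W θ ω) (S : Finset (Fin n)) : IsUnit (1 - Hmat W θ ω S) := by
  rw [← Matrix.mulVec_injective_iff_isUnit]
  intro x y hxy
  have aux : ∀ x y : Fin n → ℝ, (1 - Hmat W θ ω S).mulVec x = (1 - Hmat W θ ω S).mulVec y →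
      ∀ i, x i ≤ y i := by
    intro x y hxy i
    have := h.comparison S (x - y) (fun i => by
      rw [← Hmat_mulVec, Matrix.mulVec_sub]
      have := congrFun hxy i
      simp only [Matrix.sub_mulVec, Matrix.one_mulVec, Pi.sub_apply] at this ⊢
      linarith) i
    simp only [Pi.sub_apply] at this
    linarith
  funext i
  exact le_antisymm (aux x y hxy i) (aux y x hxy.symm i)

theorem GHyp.fix (h : GHyp W θ ω) (S : Finset (Fin n)) (i : Fin n) :
    p0vec W θ ω S i = (1 - ind ω S i) * ((1 - θ i) * W.mulVec (p0vec W θ ω S) i)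
      + (1 - θ i) * ind ω S i := by
  have hdet := (Matrix.isUnit_iff_isUnit_det _).1 (h.isUnit S)
  have h1 : (1 - Hmat W θ ω S).mulVec (p0vec W θ ω S) =
      (1 - Matrix.diagonal θ).mulVec (ind ω S) := by
    conv_lhs => unfold p0vec
    rw [Matrix.mulVec_mulVec, ← Matrix.mul_assoc, Matrix.mul_nonsing_inv _ hdet, Matrix.one_mul]
    rfl
  have h2 := congrFun h1 i
  simp only [Matrix.sub_mulVec, Matrix.one_mulVec, Pi.sub_apply, Matrix.mulVec_diagonal,
    Hmat_mulVec] at h2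
  linarith

theorem GHyp.le_one (h : GHyp W θ ω) (S : Finset (Fin n)) (i : Fin n) :
    p0vec W θ ω S i ≤ 1 := by
  have := h.comparison S (p0vec W θ ω S - fun _ => 1) (fun i => by
    rw [Matrix.mulVec_sub]
    simp only [Pi.sub_apply, h.mulVec_const]
    have h1 := h.fix S i
    have h2 := h.t0 i
    nlinarith) i
  simp only [Pi.sub_apply] at this
  linarith

theorem GHyp.W_le_one (h : GHyp W θ ω) (S : Finset (Fin n)) (i : Fin n) :
    W.mulVec (p0vec W θ ω S) i ≤ 1 := by
  have := h.mulVec_mono (h.le_one S) i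
  rwa [h.mulVec_const] at this

theorem GHyp.mono (h : GHyp W θ ω) {S T : Finset (Fin n)} (hST : S ⊆ T) (i : Fin n) :
    p0vec W θ ω S i ≤ p0vec W θ ω T i := by
  have := h.comparison T (p0vec W θ ω S - p0vec W θ ω T) (fun i => by
    rw [Matrix.mulVec_sub]
    simp only [Pi.sub_apply]
    have h1 := h.fix S i
    have h2 := h.fix T i
    have h3 := h.W_le_one S i
    have h4 := h.indmono hST i
    have h5 := h.tlt i
    have h6 : 0 ≤ (1 - θ i) * ((ind ω T i - ind ω S i) * (1 - W.mulVec (p0vec W θ ω S) i)) :=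
      mul_nonneg (by linarith) (mul_nonneg (by linarith) (by linarith))
    nlinarith) i
  simp only [Pi.sub_apply] at this
  linarith

theorem ind_insert_self {B : Finset (Fin n)} (a : Fin n) :
    ind ω (insert a B) a = ω := by simp [ind]

theorem ind_not {B : Finset (Fin n)} {a : Fin n} (ha : a ∉ B) :
    ind ω B a = 0 := by simp [ind, ha]

theorem ind_insert_ne {B : Finset (Fin n)} {a i : Fin n} (hi : i ≠ a) :
    ind ω (insert a B) i = ind ω B i := by simp [ind, hi]

theorem GHyp.submod (h : GHyp W θ ω) {A B : Finset (Fin n)} (hAB : A ⊆ B) (a : Fin n) (i : Fin n) :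
    p0vec W θ ω (insert a B) i - p0vec W θ ω B i ≤
      p0vec W θ ω (insert a A) i - p0vec W θ ω A i := by
  by_cases haB : a ∈ B
  · rw [Finset.insert_eq_of_mem haB]
    have := h.mono (Finset.subset_insert a A) i
    linarith
  have haA : a ∉ A := fun hh => haB (hAB hh)
  have := h.comparison A ((p0vec W θ ω (insert a B) - p0vec W θ ω B) -
    (p0vec W θ ω (insert a A) - p0vec W θ ω A)) (fun i => by
    simp only [Matrix.mulVec_sub]
    simp only [Pi.sub_apply]
    have h1 := h.fix A i
    have h2 := h.fix B i
    have h3 := h.fix (insert a A) i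
    have h4 := h.fix (insert a B) i
    have h5 := h.tlt i
    have hB := h.mulVec_mono (h.mono (Finset.subset_insert a B)) i
    have hI := h.mulVec_mono (h.mono (Finset.insert_subset_insert a hAB)) i
    have h7 := h.indmono hAB i
    by_cases hi : i = a
    · subst hi
      rw [ind_insert_self] at h3 h4
      rw [ind_not haA] at h1 ⊢
      rw [ind_not haB] at h2
      have h6 := mul_nonneg (mul_nonneg (sub_nonneg.2 h5.le) h.o0.le) (sub_nonneg.2 hI)
      nlinarith
    · rw [ind_insert_ne hi] at h3 h4
      have h6 := mul_nonneg (mul_nonneg (sub_nonneg.2 h5.le) (sub_nonneg.2 h7)) (sub_nonneg.2 hB)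
      nlinarith) i
  simp only [Pi.sub_apply] at this
  linarith

theorem GHyp.sp_mono (h : GHyp W θ ω) {S T : Finset (Fin n)} (hST : S ⊆ T) :
    sp0 W θ ω S ≤ sp0 W θ ω T := by
  unfold sp0
  have := Finset.sum_le_sum (s := Finset.univ) fun i _ => h.mono hST i
  gcongr

theorem GHyp.sp_submod (h : GHyp W θ ω) {A B : Finset (Fin n)} (hAB : A ⊆ B) (a : Fin n) :
    sp0 W θ ω (insert a B) - sp0 W θ ω B ≤ sp0 W θ ω (insert a A) - sp0 W θ ω A := by
  unfold sp0
  have := Finset.sum_le_sum (s := Finset.univ) fun i _ => h.submod hAB a i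
  simp only [Finset.sum_sub_distrib] at this
  rw [← sub_div, ← sub_div]
  apply div_le_div_of_nonneg_right _ (by positivity)
  linarith

theorem sp_empty : 0 ≤ sp0 W θ ω ∅ := by
  have : p0vec W θ ω ∅ = 0 := by
    unfold p0vec
    simp only [Finset.notMem_empty, if_false]
    exact Matrix.mulVec_zero _
  unfold sp0
  rw [this]
  simp
  positivity

theorem GHyp.sp_union (h : GHyp W θ ω) (A T : Finset (Fin n)) (D : ℝ)
    (hD : ∀ j, sp0 W θ ω (insert j A) - sp0 W θ ω A ≤ D) :
    sp0 W θ ω (T ∪ A) ≤ sp0 W θ ω A + T.card * D := by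
  induction T using Finset.induction_on with
  | empty => simp
  | insert a T ha ih =>
    rw [Finset.insert_union, Finset.card_insert_of_notMem ha]
    have h1 := h.sp_submod (Finset.subset_union_right : A ⊆ T ∪ A) a
    have h2 := hD a
    push_cast
    linarith

end helpers

/-- The greedy algorithm achieves a `(1 - 1/e)` approximation of the optimal social power. -/
theorem greedy_approximation
    (n : ℕ) (hn : 1 ≤ n) (W : Matrix (Fin n) (Fin n) ℝ)
    (hW0 : ∀ i j, 0 ≤ W i j) (hW1 : ∀ i, ∑ j, W i j = 1)
    (hconn : ∀ i j : Fin n, ∃ k, 1 ≤ k ∧ 0 < (W ^ k) i j)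
    (θ : Fin n → ℝ) (hθ : ∀ i, θ i ∈ Set.Icc (0 : ℝ) 1) (hθpos : ∃ j, 0 < θ j)
    (hθlt : ∀ i, θ i < 1)
    (ω : ℝ) (hω : ω ∈ Set.Ioo (0 : ℝ) 1)
    (K : ℕ) (hK : 1 ≤ K) (hKn : K ≤ n)
    (Ssel : ℕ → Finset (Fin n)) (h0 : Ssel 0 = ∅)
    (hgreedy : ∀ k < K, ∃ i : Fin n,
      Ssel (k + 1) = insert i (Ssel k) ∧
      ∀ j : Fin n, sp0 W θ ω (insert j (Ssel k)) ≤ sp0 W θ ω (insert i (Ssel k))) :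
    ∀ S : Finset (Fin n), S.card ≤ K →
      (1 - 1 / Real.exp 1) * sp0 W θ ω S ≤ sp0 W θ ω (Ssel K) := by
  intro S hS
  have h : GHyp W θ ω := ⟨hW0, hW1, hconn, fun i => (hθ i).1, hθpos, hθlt, hω.1, hω.2⟩
  have hKpos : (0:ℝ) < K := by exact_mod_cast hK
  have hK1 : (1:ℝ) ≤ K := by exact_mod_cast hK
  have hc : (0:ℝ) ≤ 1 - 1 / K := by
    rw [sub_nonneg, div_le_one hKpos]; exact hK1
  have step : ∀ k < K, sp0 W θ ω S - sp0 W θ ω (Ssel (k+1)) ≤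
      (1 - 1 / K) * (sp0 W θ ω S - sp0 W θ ω (Ssel k)) := by
    intro k hk
    obtain ⟨i, hi, hmax⟩ := hgreedy k hk
    rw [← hi] at hmax
    have h1 := h.sp_union (Ssel k) S (sp0 W θ ω (Ssel (k+1)) - sp0 W θ ω (Ssel k))
      (fun j => by linarith [hmax j])
    have h2 := h.sp_mono (Finset.subset_union_left : S ⊆ S ∪ Ssel k)
    have h3 : sp0 W θ ω (Ssel k) ≤ sp0 W θ ω (Ssel (k+1)) := by
      rw [hi]; exact h.sp_mono (Finset.subset_insert _ _)
    have h4 : (S.card : ℝ) ≤ K := by exact_mod_cast hS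
    have h5 : sp0 W θ ω S - sp0 W θ ω (Ssel k) ≤
        K * (sp0 W θ ω (Ssel (k+1)) - sp0 W θ ω (Ssel k)) := by nlinarith
    have h6 : (1 / (K:ℝ)) * (sp0 W θ ω S - sp0 W θ ω (Ssel k)) ≤
        sp0 W θ ω (Ssel (k+1)) - sp0 W θ ω (Ssel k) := by
      rw [one_div, inv_mul_le_iff₀ hKpos]; exact h5
    linarith
  have iter : ∀ k ≤ K, sp0 W θ ω S - sp0 W θ ω (Ssel k) ≤
      (1 - 1 / (K:ℝ)) ^ k * (sp0 W θ ω S - sp0 W θ ω ∅) := by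
    intro k
    induction k with
    | zero => intro _; rw [h0]; simp
    | succ k ih =>
      intro hk
      have h1 := step k (by omega)
      have h2 := mul_le_mul_of_nonneg_left (ih (by omega)) hc
      rw [pow_succ']
      linarith
  have h1 := iter K le_rfl
  have h2 : (1 - 1 / (K:ℝ)) ^ K ≤ 1 / Real.exp 1 := by
    have := Real.one_sub_div_pow_le_exp_neg (n := K) (t := 1) hK1
    rwa [Real.exp_neg, ← one_div] at this
  have h3 : sp0 W θ ω ∅ ≤ sp0 W θ ω S := h.sp_mono (Finset.empty_subset S)
  have h4 : 0 ≤ sp0 W θ ω ∅ := sp_empty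
  have h5 := mul_le_mul_of_nonneg_right h2 (sub_nonneg.2 h3)
  have h6 : 0 ≤ 1 / Real.exp 1 * sp0 W θ ω ∅ := by positivity
  linarith
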